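/- Let n ≥ 1 be an integer, N = p₁^{k₁}···p_r^{k_r} with distinct primes p₁ > p₂ > ··· > p_r and kᵢ ≥ 1, let m ≥ 0 be an integer and ε ∈ [0,1]. If S ⊆ (ℤ/Nℤ)ⁿ is an (m,ε)-Kakeya set, then |S| ≥ C_{N,n} · ε · mⁿ, where C_{N,n} = ( ∏_{j=1}^{r-1} 1/(k_j·log(p_j) + 1) · ∏_{i=1}^{r} 1/(2(k_i + ⌈log_{p_i}(n)⌉)) )ⁿ and log denotes the natural logarithm. -/

import Mathlib

/-- A vector in `(ℤ/Nℤ)ⁿ` is primitive (i.e. belongs to a class in `ℙ(ℤ/Nℤ)^{n-1}`)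
iff its coordinates generate the unit ideal, equivalently for every prime power factor
`pᵢ^{kᵢ}` of `N`, the reduction mod `pᵢ^{kᵢ}` has a unit coordinate. -/
def IsPrimitiveVec {N n : ℕ} (u : Fin n → ZMod N) : Prop :=
  ∃ v : Fin n → ZMod N, ∑ i, v i * u i = 1

/-- `P` is a fixed set of representatives for the projective space `ℙ(ℤ/Nℤ)^{n-1}`. -/
def IsProjRepSet (N n : ℕ) [NeZero N] (P : Finset (Fin n → ZMod N)) : Prop :=
  (∀ u ∈ P, IsPrimitiveVec u) ∧
  ∀ u : Fin n → ZMod N, IsPrimitiveVec u →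
    ∃! w, w ∈ P ∧ ∃ c : (ZMod N)ˣ, u = (c : ZMod N) • w

/-- The line `{a + t·u : t ∈ ℤ/Nℤ}` in `(ℤ/Nℤ)ⁿ`, as a finite set. -/
def lineF {N n : ℕ} [NeZero N] (a u : Fin n → ZMod N) : Finset (Fin n → ZMod N) :=
  Finset.image (fun t : ZMod N => a + t • u) Finset.univ

/-!
The proof is a rank argument over a domain `O` of characteristic zero containing a primitive root of
unity `ζ` of order `p ^ k` which reduces to `1` in a field `F` of characteristic `p`. A point
`x ∈ (ℤ/p^kℤ)ⁿ` becomes the point with coordinates `ζ ^ xᵢ`, and a line in direction `u` becomes the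
set of points `q = ζ ^ t` of a monomial curve `q ↦ (cᵢ q ^ uᵢ)ᵢ`. A polynomial vanishing to order
`d` at all points of `S` therefore restricts to a multiple of `(X - 1) ^ (d * s)` modulo `p` on a
curve coming from a line with `s` points in `S`. The Taylor coefficients of order less than `d * s`
of these restrictions are functionals on polynomials over `F`, so that independent ones among them
number at most `#S` times the number of derivatives of order less than `d`. For the directions
having one coordinate equal to `1`, Newton polynomials are triangular test vectors proving
independence; averaging over the general linear group carries the count to all directions.

For composite `N`, fibre `(ℤ/Nℤ)ⁿ` over a coprime factor. A rich line meets the fibres in lines of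
varying richness, and keeping only the best level of richness costs a factor which is a harmonic
sum: this is where the logarithms come from. The bound on the number of independent functionals is
linear in `#S`, so it can be summed over the fibres, which leaves the same problem for the other
factor.
-/

open Finset Polynomial Matrix

theorem emultiplicity_X_eq_coe_iff {R : Type*} [CommRing R] {f : R[X]} {n : ℕ} :
    emultiplicity X f = n ↔ f.coeff n ≠ 0 ∧ ∀ m < n, f.coeff m = 0 := by
  rw [emultiplicity_eq_coe, X_pow_dvd_iff, X_pow_dvd_iff]
  grind

section NewtonOrder

/-- The order of vanishing at `q = 1` in characteristic `p` of `∏ s < g, (q ^ g - q ^ s)`, the value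
at `q ^ g` of the Newton polynomial `∏ s < g, (Y - q ^ s)`. -/
def newtonOrder (p g : ℕ) : ℕ := ∑ i ∈ range g, p ^ padicValNat p (i + 1)

variable (p : ℕ) [hp : Fact p.Prime] (R : Type*) [CommRing R] [IsDomain R] [CharP R p]

theorem emultiplicity_X_one_add_X_pow_sub_one {i : ℕ} (hi : i ≠ 0) :
    emultiplicity X ((1 + X : R[X]) ^ i - 1) = (p ^ padicValNat p i : ℕ) := by
  obtain ⟨m, hm⟩ : p ^ padicValNat p i ∣ i := pow_padicValNat_dvd
  have hm_ne : (m : R) ≠ 0 := fun h ↦ pow_succ_padicValNat_not_dvd (p := p) hi <| by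
    rw [CharP.cast_eq_zero_iff R p] at h
    rw [pow_succ]
    nth_rewrite 2 [hm]
    exact Nat.mul_dvd_mul_left _ h
  have multiplicity_m : emultiplicity X ((1 + X : R[X]) ^ m - 1) = (1 : ℕ) := by
    rw [emultiplicity_X_eq_coe_iff]
    simp [coeff_one_add_X_pow, coeff_one, hm_ne]
  have frobenius : (1 + X : R[X]) ^ i - 1 = ((1 + X) ^ m - 1) ^ p ^ padicValNat p i := by
    rw [sub_pow_char_pow, one_pow, ← pow_mul, mul_comm m, ← hm]
  rw [frobenius, emultiplicity_pow prime_X, multiplicity_m, ← Nat.cast_mul, mul_one]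

theorem emultiplicity_X_prod_one_add_X_pow_sub_pow (g : ℕ) :
    emultiplicity X (∏ s ∈ range g, ((1 + X : R[X]) ^ g - (1 + X) ^ s)) = newtonOrder p g := by
  have not_dvd (s : ℕ) : ¬ X ∣ (1 + X : R[X]) ^ s := by simp [X_dvd_iff, coeff_zero_eq_eval_zero]
  rw [Finset.emultiplicity_prod prime_X, newtonOrder,
    ← sum_range_reflect fun i ↦ p ^ padicValNat p (i + 1), Nat.cast_sum]
  refine sum_congr rfl fun s hs ↦ ?_
  have hs := mem_range.1 hs
  have factor : (1 + X : R[X]) ^ g - (1 + X) ^ s = (1 + X) ^ s * ((1 + X) ^ (g - s) - 1) := by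
    rw [mul_sub, ← pow_add, mul_one, Nat.add_sub_cancel' hs.le]
  rw [factor, emultiplicity_mul prime_X, emultiplicity_eq_zero.2 (not_dvd s), zero_add,
    emultiplicity_X_one_add_X_pow_sub_one p R (Nat.sub_ne_zero_of_lt hs)]
  congr 4
  lia

theorem newtonOrder_le {l g : ℕ} (hg : g < p ^ l) : newtonOrder p g ≤ l * g := by
  have pow_le (i : ℕ) (hi : i ∈ range g) :
      p ^ padicValNat p (i + 1) ≤ ∑ a ∈ range l, if p ^ a ∣ i + 1 then p ^ a else 0 := by
    have hdvd : p ^ padicValNat p (i + 1) ∣ i + 1 := pow_padicValNat_dvd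
    have hlt : p ^ padicValNat p (i + 1) < p ^ l :=
      (Nat.le_of_dvd i.succ_pos hdvd).trans_lt (by grind)
    have hmem := mem_range.2 ((Nat.pow_lt_pow_iff_right hp.out.one_lt).1 hlt)
    simpa only [if_pos hdvd] using single_le_sum
      (f := fun a ↦ if p ^ a ∣ i + 1 then p ^ a else 0) (fun _ _ ↦ Nat.zero_le _) hmem
  calc newtonOrder p g ≤ ∑ i ∈ range g, ∑ a ∈ range l, if p ^ a ∣ i + 1 then p ^ a else 0 :=
        sum_le_sum pow_le
    _ = ∑ a ∈ range l, g / p ^ a * p ^ a := by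
        rw [sum_comm]
        simp only [← sum_filter, sum_const, Nat.card_multiples, smul_eq_mul]
    _ ≤ ∑ _a ∈ range l, g := sum_le_sum fun a _ ↦ Nat.div_mul_le_self g (p ^ a)
    _ = l * g := by simp

end NewtonOrder

section CurveCoeff

variable {ι : Type*} (R : Type*) [CommRing R]

/-- The `j`-th Taylor coefficient at `q = 1` of the restriction of a polynomial to the monomial
curve `q ↦ (q ^ u i)ᵢ`. -/
noncomputable def curveCoeff (u : ι → ℕ) (j : ℕ) : MvPolynomial ι R →ₗ[R] R :=
  lcoeff R j ∘ₗ (MvPolynomial.aeval fun i ↦ (1 + X : R[X]) ^ u i).toLinearMap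

variable {R}

theorem curveCoeff_congr (p : ℕ) [Fact p.Prime] [CharP R p] {l j : ℕ}
    (hj : j < p ^ l) {u u' : ι → ℕ} (h : ∀ i, u i ≡ u' i [MOD p ^ l]) :
    curveCoeff R u j = curveCoeff R u' j := by
  let mk := Ideal.Quotient.mkₐ R (Ideal.span {(X : R[X]) ^ p ^ l})
  have mk_pow : mk (1 + X) ^ p ^ l = 1 := by
    rw [← map_pow, add_pow_char_pow, one_pow, map_add, map_one, add_eq_left,
      Ideal.Quotient.mkₐ_eq_mk, Ideal.Quotient.eq_zero_iff_dvd]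
  have mk_aeval : mk.comp (MvPolynomial.aeval fun i ↦ (1 + X : R[X]) ^ u i) =
      mk.comp (MvPolynomial.aeval fun i ↦ (1 + X : R[X]) ^ u' i) := by
    ext i
    simpa using pow_eq_pow_of_modEq (h i) mk_pow
  refine LinearMap.ext fun f ↦ sub_eq_zero.1 ?_
  rw [curveCoeff, curveCoeff]
  simp only [LinearMap.comp_apply, lcoeff_apply, AlgHom.toLinearMap_apply, ← coeff_sub]
  refine X_pow_dvd_iff.1 ?_ j hj
  rw [← Ideal.mem_span_singleton, ← Ideal.Quotient.mk_eq_mk_iff_sub_mem]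
  exact DFunLike.congr_fun mk_aeval f

theorem curveCoeff_aeval_prod_X_pow [Fintype ι] (u : ι → ℕ) (j : ℕ) (w : ι → ι → ℕ)
    (f : MvPolynomial ι R) :
    curveCoeff R u j (MvPolynomial.aeval (fun i ↦ ∏ i', MvPolynomial.X i' ^ w i i') f) =
      curveCoeff R (fun i ↦ ∑ i', u i' * w i i') j f := by
  have hcomp : (MvPolynomial.aeval fun i ↦ (1 + X : R[X]) ^ u i).comp
      (MvPolynomial.aeval fun i ↦ ∏ i', MvPolynomial.X (R := R) i' ^ w i i') =
      MvPolynomial.aeval fun i ↦ (1 + X : R[X]) ^ ∑ i', u i' * w i i' := by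
    ext i : 1
    simp [map_prod, ← pow_mul, prod_pow_eq_pow_sum]
  exact congrArg (coeff · j) (DFunLike.congr_fun hcomp f)

theorem linearIndependent_curveCoeff_mulVec (p : ℕ) [Fact p.Prime] [CharP R p] {l : ℕ}
    [Fintype ι] [DecidableEq ι] {β : Type*} {u : β → ι → ℕ} {j : β → ℕ} (hj : ∀ b, j b < p ^ l)
    (h : LinearIndependent R fun b ↦ curveCoeff R (u b) (j b)) (g : GL ι (ZMod (p ^ l))) :
    LinearIndependent R fun b ↦
      curveCoeff R (fun i ↦ (g.1 *ᵥ (fun i' ↦ (u b i' : ZMod (p ^ l)))) i |>.val) (j b) := by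
  have : NeZero (p ^ l) := ⟨pow_ne_zero _ (Fact.out : p.Prime).ne_zero⟩
  let subst : MvPolynomial ι R →ₐ[R] MvPolynomial ι R :=
    MvPolynomial.aeval fun i ↦ ∏ i', MvPolynomial.X i' ^ (g⁻¹.1 i i').val
  refine LinearIndependent.of_comp (LinearMap.lcomp R R subst.toLinearMap) ?_
  convert h using 2 with b
  refine LinearMap.ext fun f ↦ ?_
  simp only [Function.comp_apply, LinearMap.lcomp_apply, AlgHom.toLinearMap_apply, subst,
    curveCoeff_aeval_prod_X_pow]
  rw [curveCoeff_congr p (hj b) fun i ↦ ?_]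
  rw [← ZMod.natCast_eq_natCast_iff]
  have hinv : g⁻¹.1 *ᵥ g.1 *ᵥ (fun i' ↦ (u b i' : ZMod (p ^ l))) =
      fun i' ↦ (u b i' : ZMod (p ^ l)) := by
    rw [mulVec_mulVec, ← Units.val_mul, inv_mul_cancel, Units.val_one, one_mulVec]
  simpa [mulVec, dotProduct, mul_comm] using congrFun hinv i

end CurveCoeff

section NormalizedDirections

theorem linearIndependent_of_triangular {α β K M : Type*} [CommRing K] [IsDomain K]
    [AddCommGroup M] [Module K M] [LinearOrder α] (key : β → α) (φ : β → M →ₗ[K] K) (x : β → M)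
    (ne_zero : ∀ b, φ b (x b) ≠ 0) (eq_zero : ∀ b c, b ≠ c → key b ≤ key c → φ b (x c) = 0) :
    LinearIndependent K φ := by
  rw [linearIndependent_iff]
  intro c hc
  by_contra hne
  obtain ⟨b, hb, hmax⟩ := c.support.exists_max_image key (Finsupp.support_nonempty_iff.2 hne)
  have heval : ∑ a ∈ c.support, c a * φ a (x b) = 0 := by
    simpa [Finsupp.linearCombination_apply, Finsupp.sum] using LinearMap.congr_fun hc (x b)
  rw [sum_eq_single_of_mem b hb fun a ha hab ↦ by rw [eq_zero a b hab (hmax a ha), mul_zero]]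
    at heval
  exact mul_ne_zero (Finsupp.mem_support_iff.1 hb) (ne_zero b) heval

variable {ι : Type*} [Fintype ι] [DecidableEq ι]

/-- The direction `b` with its coordinate `i₀` set to one. -/
def normalizedDirection (i₀ : ι) (b : ι →₀ ℕ) : ι → ℕ := Function.update b i₀ 1

/-- The order of vanishing assigned to the direction `normalizedDirection i₀ b`; the coordinate
`b i₀` which is not seen by the direction serves to repeat it at several consecutive orders. -/
def directionLevel (p : ℕ) (i₀ : ι) (b : ι →₀ ℕ) : ℕ :=
  b i₀ + ∑ i ∈ univ.erase i₀, newtonOrder p (b i)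

theorem directionLevel_le (p : ℕ) [Fact p.Prime] {l : ℕ} (hl : l ≠ 0) (i₀ : ι) {b : ι →₀ ℕ}
    (hb : ∀ i, b i < p ^ l) : directionLevel p i₀ b ≤ l * ∑ i, b i := by
  rw [← add_sum_erase _ _ (mem_univ i₀), mul_add, mul_sum]
  exact add_le_add (Nat.le_mul_of_pos_left _ (Nat.pos_of_ne_zero hl))
    (sum_le_sum fun i _ ↦ newtonOrder_le p (hb i))

/-- The polynomial in the variables `X i` dual to the index `b`: a Newton polynomial in each
`X i`, `i ≠ i₀`, with nodes the powers of `X i₀`, times a power of `X i₀ - 1`. -/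
noncomputable def newtonTest (R : Type*) [CommRing R] (i₀ : ι) (b : ι →₀ ℕ) : MvPolynomial ι R :=
  (MvPolynomial.X i₀ - 1) ^ b i₀ *
    ∏ i ∈ univ.erase i₀, ∏ s ∈ range (b i), (MvPolynomial.X i - MvPolynomial.X i₀ ^ s)

variable (R : Type*) [CommRing R]

theorem aeval_newtonTest (i₀ : ι) (b c : ι →₀ ℕ) :
    MvPolynomial.aeval (fun i ↦ (1 + X : R[X]) ^ normalizedDirection i₀ b i) (newtonTest R i₀ c) =
      X ^ c i₀ * ∏ i ∈ univ.erase i₀, ∏ s ∈ range (c i), ((1 + X) ^ b i - (1 + X) ^ s) := by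
  have hprod (i : ι) (hi : i ∈ univ.erase i₀) : normalizedDirection i₀ b i = b i :=
    Function.update_of_ne (ne_of_mem_erase hi) _ _
  have hi₀ : normalizedDirection i₀ b i₀ = 1 := Function.update_self ..
  simp only [newtonTest, map_mul, map_pow, map_sub, map_one, map_prod, MvPolynomial.aeval_X, hi₀,
    pow_one, add_sub_cancel_left]
  exact congrArg _ (prod_congr rfl fun i hi ↦ by rw [hprod i hi])

theorem emultiplicity_X_aeval_newtonTest [IsDomain R] (p : ℕ) [Fact p.Prime] [CharP R p] {i₀ : ι}
    {b c : ι →₀ ℕ} (hbc : ∀ i ≠ i₀, b i = c i) :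
    emultiplicity X (MvPolynomial.aeval (fun i ↦ (1 + X : R[X]) ^ normalizedDirection i₀ b i)
      (newtonTest R i₀ c)) = directionLevel p i₀ c := by
  have hprod : ∏ i ∈ univ.erase i₀, ∏ s ∈ range (c i), ((1 + X : R[X]) ^ b i - (1 + X) ^ s) =
      ∏ i ∈ univ.erase i₀, ∏ s ∈ range (c i), ((1 + X) ^ c i - (1 + X) ^ s) :=
    prod_congr rfl fun i hi ↦ by rw [hbc i (ne_of_mem_erase hi)]
  rw [aeval_newtonTest, hprod, emultiplicity_mul prime_X, Finset.emultiplicity_prod prime_X,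
    emultiplicity_pow_self_of_prime prime_X]
  simp only [emultiplicity_X_prod_one_add_X_pow_sub_pow p R, directionLevel]
  push_cast
  rfl

theorem aeval_newtonTest_eq_zero {i₀ i : ι} (hi : i ≠ i₀) {b c : ι →₀ ℕ} (hlt : b i < c i) :
    MvPolynomial.aeval (fun i ↦ (1 + X : R[X]) ^ normalizedDirection i₀ b i) (newtonTest R i₀ c)
      = 0 := by
  rw [aeval_newtonTest, prod_eq_zero (mem_erase.2 ⟨hi, mem_univ i⟩)
    (prod_eq_zero (mem_range.2 hlt) (sub_self _)), mul_zero]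

theorem linearIndependent_curveCoeff [IsDomain R] (p : ℕ) [Fact p.Prime] [CharP R p] (i₀ : ι) :
    LinearIndependent R fun b : ι →₀ ℕ ↦
      curveCoeff R (normalizedDirection i₀ b) (directionLevel p i₀ b) := by
  refine linearIndependent_of_triangular
    (fun b ↦ toLex (∑ i ∈ univ.erase i₀, b i, b i₀)) _ (newtonTest R i₀) (fun b ↦ ?_)
    fun b c hbc hkey ↦ ?_
  · exact (emultiplicity_X_eq_coe_iff.1 <|
      emultiplicity_X_aeval_newtonTest R p (i₀ := i₀) (b := b) fun i _ ↦ rfl).1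
  rcases em (∃ i ≠ i₀, b i < c i) with ⟨i, hi, hlt⟩ | hle
  · simp [curveCoeff, aeval_newtonTest_eq_zero R hi hlt]
  push Not at hle
  have hle' : ∀ i ∈ univ.erase i₀, c i ≤ b i := fun i hi ↦ hle i (ne_of_mem_erase hi)
  obtain ⟨hsum, hi₀⟩ : ∑ i ∈ univ.erase i₀, b i = ∑ i ∈ univ.erase i₀, c i ∧ b i₀ ≤ c i₀ := by
    rcases Prod.Lex.toLex_le_toLex.1 hkey with h | h
    · exact absurd (sum_le_sum hle') h.not_ge
    · exact h
  have hagree (i) (hi : i ≠ i₀) : b i = c i :=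
    ((sum_eq_sum_iff_of_le hle').1 hsum.symm i (mem_erase.2 ⟨hi, mem_univ i⟩)).symm
  have hlevel : directionLevel p i₀ b < directionLevel p i₀ c := by
    have hlt : b i₀ < c i₀ := hi₀.lt_of_ne fun h ↦ hbc <| Finsupp.ext fun i ↦ by
      rcases eq_or_ne i i₀ with rfl | hi
      exacts [h, hagree i hi]
    have hrest : ∑ i ∈ univ.erase i₀, newtonOrder p (b i) =
        ∑ i ∈ univ.erase i₀, newtonOrder p (c i) :=
      sum_congr rfl fun i hi ↦ by rw [hagree i (ne_of_mem_erase hi)]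
    rw [directionLevel, directionLevel, hrest]
    exact Nat.add_lt_add_right hlt _
  exact (emultiplicity_X_eq_coe_iff.1 (emultiplicity_X_aeval_newtonTest R p hagree)).2 _ hlevel

end NormalizedDirections

/-- The set `S` contains at least `m` points of some line in direction `u`, where points are counted
by their parameter. -/
def HasRichLine {ι R : Type*} [CommRing R] (S : Finset (ι → R)) (u : ι → R) (m : ℕ) : Prop :=
  ∃ a : ι → R, ∃ T : Finset R, m ≤ #T ∧ ∀ t ∈ T, a + t • u ∈ S

theorem HasRichLine.mono {ι R : Type*} [CommRing R] {S : Finset (ι → R)} {u : ι → R} {m m' : ℕ}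
    (h : HasRichLine S u m) (hm : m' ≤ m) : HasRichLine S u m' :=
  let ⟨a, T, hT, hTS⟩ := h
  ⟨a, T, hm.trans hT, hTS⟩

theorem HasRichLine.subset {ι R : Type*} [CommRing R] {S S' : Finset (ι → R)} {u : ι → R} {m : ℕ}
    (h : HasRichLine S u m) (hS : S ⊆ S') : HasRichLine S' u m :=
  let ⟨a, T, hT, hTS⟩ := h
  ⟨a, T, hT, fun t ht ↦ hS (hTS t ht)⟩

theorem HasRichLine.le_card {ι R : Type*} [CommRing R] [Fintype R] {S : Finset (ι → R)} {u : ι → R}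
    {m : ℕ} (h : HasRichLine S u m) : m ≤ Fintype.card R := by
  obtain ⟨a, T, hT, -⟩ := h
  exact hT.trans (card_le_univ T)

theorem hasRichLine_zero {ι R : Type*} [CommRing R] (S : Finset (ι → R)) (u : ι → R) :
    HasRichLine S u 0 :=
  ⟨0, ∅, le_rfl, by simp⟩

section MultiIndices

variable (ι : Type*) [Fintype ι] [DecidableEq ι]

/-- The multi-indices of total degree less than `d`. -/
def multiIndicesLT (d : ℕ) : Finset (ι →₀ ℕ) := (range d).biUnion (finsuppAntidiag univ)

variable {ι}

theorem mem_multiIndicesLT {d : ℕ} {α : ι →₀ ℕ} : α ∈ multiIndicesLT ι d ↔ ∑ i, α i < d := by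
  simp [multiIndicesLT, mem_finsuppAntidiag]

theorem multiIndicesLT_mono {d d' : ℕ} (h : d ≤ d') : multiIndicesLT ι d ⊆ multiIndicesLT ι d' :=
  biUnion_subset_biUnion_of_subset_left _ (range_subset_range.2 h)

variable (ι)

theorem factorial_mul_card_multiIndicesLT [Nonempty ι] (d : ℕ) :
    (Fintype.card ι).factorial * #(multiIndicesLT ι d) = d.ascFactorial (Fintype.card ι) := by
  have hdisj : ((range d : Finset ℕ) : Set ℕ).PairwiseDisjoint
      (finsuppAntidiag (univ : Finset ι)) := fun a _ b _ hab ↦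
    disjoint_left.2 fun α ha hb ↦ hab <| by
      rw [mem_finsuppAntidiag] at ha hb
      exact ha.1.symm.trans hb.1
  rw [Nat.ascFactorial_eq_factorial_mul_choose', multiIndicesLT, card_biUnion hdisj]
  simp only [card_finsuppAntidiag_nat_eq_multichoose, card_univ]
  cases d with
  | zero => simp [Nat.choose_eq_zero_of_lt (Nat.sub_lt Fintype.card_pos one_pos)]
  | succ d => rw [Nat.sum_range_multichoose, Nat.succ_add_sub_one]

theorem card_multiIndicesLT_mul_pow_le [Nonempty ι] {d s l : ℕ} (hl : l ≠ 0)
    (hd : Fintype.card ι * s ≤ l * d) :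
    (#(multiIndicesLT ι (Fintype.card ι)) : ℝ) * (1 / (2 * l) * s) ^ Fintype.card ι ≤
      #(multiIndicesLT ι d) := by
  set n := Fintype.card ι
  obtain ⟨n', hn'⟩ : ∃ n', n = n' + 1 := Nat.exists_eq_succ_of_ne_zero Fintype.card_ne_zero
  have upper : (n.factorial : ℝ) * #(multiIndicesLT ι n) ≤ (2 * n) ^ n := by
    have : n.ascFactorial n ≤ (2 * n) ^ n := by
      rw [hn']
      exact (Nat.ascFactorial_le_pow_add n' (n' + 1)).trans (Nat.pow_le_pow_left (by lia) _)
    exact_mod_cast (factorial_mul_card_multiIndicesLT ι n).trans_le this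
  have lower : (d : ℝ) ^ n ≤ n.factorial * #(multiIndicesLT ι d) := by
    exact_mod_cast (Nat.pow_succ_le_ascFactorial d n).trans_eq
      (factorial_mul_card_multiIndicesLT ι d).symm
  have hds : (2 * n : ℝ) * (1 / (2 * l) * s) ≤ d := by
    have hd' : (n * s : ℝ) ≤ l * d := by exact_mod_cast hd
    have hl' : (0 : ℝ) < l := by positivity
    calc (2 * n : ℝ) * (1 / (2 * l) * s) = n * s / l := by field_simp
      _ ≤ d := (div_le_iff₀' hl').2 hd'
  refine le_of_mul_le_mul_left ?_ (Nat.cast_pos (α := ℝ).2 n.factorial_pos)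
  calc (n.factorial : ℝ) * (#(multiIndicesLT ι n) * (1 / (2 * l) * s) ^ n)
      ≤ (2 * n) ^ n * (1 / (2 * l) * s) ^ n := by rw [← mul_assoc]; gcongr
    _ = (2 * n * (1 / (2 * l) * s)) ^ n := (mul_pow _ _ _).symm
    _ ≤ d ^ n := by gcongr
    _ ≤ n.factorial * #(multiIndicesLT ι d) := lower

end MultiIndices

section RankMethod

theorem surjective_of_forall_dotProduct_eq_zero {O F M B : Type*} [CommRing O] [Field F]
    {π : O →+* F} [RingHomSurjective π] [AddCommGroup M] [Module O M] [Fintype B]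
    (Ψ : M →ₛₗ[π] B → F) (h : ∀ c : B → F, (∀ x, c ⬝ᵥ Ψ x = 0) → c = 0) :
    Function.Surjective Ψ := by
  classical
  rw [← LinearMap.range_eq_top]
  by_contra hne
  obtain ⟨g, hg, hle⟩ := Submodule.exists_le_ker_of_lt_top _ (lt_top_iff_ne_top.2 hne)
  obtain ⟨c, rfl⟩ := (dotProductEquiv F B).surjective g
  refine hg ?_
  rw [h c fun x ↦ hle ⟨x, rfl⟩, map_zero]

theorem card_le_card_of_ker_le {O F M B R : Type*} [CommRing O] [IsDomain O] [Field F]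
    {π : O →+* F} (hπ : Function.Surjective π) [AddCommGroup M] [Module O M] [Fintype B] [Fintype R]
    (Ψ : M →ₗ[O] B → O) (E : M →ₗ[O] R → O) (ker_le : LinearMap.ker E ≤ LinearMap.ker Ψ)
    (nondegenerate : ∀ c : B → F, (∀ x, c ⬝ᵥ (π ∘ Ψ x) = 0) → c = 0) :
    Fintype.card B ≤ Fintype.card R := by
  classical
  have : RingHomSurjective π := ⟨hπ⟩
  let Ψπ : M →ₛₗ[π] B → F :=
    { toFun x := π ∘ Ψ x
      map_add' x y := by ext; simp
      map_smul' a x := by ext; simp }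
  choose x hx using fun b ↦
    surjective_of_forall_dotProduct_eq_zero Ψπ nondegenerate (Pi.single b 1)
  let A : Matrix B B O := .of fun b b' ↦ Ψ (x b) b'
  have det_ne_zero : A.det ≠ 0 := fun h ↦ by
    have hA : π.mapMatrix A = 1 := by
      ext b b'
      exact (congrFun (hx b) b').trans Matrix.one_eq_pi_single.symm
    simpa [h, hA] using π.map_det A
  let lincomb : (B → O) →ₗ[O] M := Fintype.linearCombination O x
  refine card_le_of_injective O (E ∘ₗ lincomb) ((injective_iff_map_eq_zero _).2 fun c hc ↦ ?_)
  refine Matrix.eq_zero_of_vecMul_eq_zero det_ne_zero ?_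
  have hΨ : Ψ (lincomb c) = 0 := ker_le hc
  rw [← hΨ]
  ext b
  simp [lincomb, Fintype.linearCombination_apply, vecMul, dotProduct, A]

variable {ι O : Type*} [CommRing O]

/-- The Taylor expansion of a polynomial at `c`. -/
noncomputable def mvTaylor (c : ι → O) : MvPolynomial ι O →ₐ[O] MvPolynomial ι O :=
  MvPolynomial.aeval fun i ↦ MvPolynomial.X i + MvPolynomial.C (c i)

theorem X_sub_C_pow_dvd_aeval [Fintype ι] {Q : MvPolynomial ι O} {c : ι → O} {d : ℕ}
    (hQ : ∀ α : ι →₀ ℕ, ∑ i, α i < d → (mvTaylor c Q).coeff α = 0) {y : ι → O[X]} {z : O}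
    (hy : ∀ i, (y i).eval z = c i) : (X - C z) ^ d ∣ MvPolynomial.aeval y Q := by
  have taylor_eq : MvPolynomial.aeval y Q =
      MvPolynomial.aeval (fun i ↦ y i - C (c i)) (mvTaylor c Q) := by
    rw [mvTaylor, ← AlgHom.comp_apply, MvPolynomial.comp_aeval]
    simp [MvPolynomial.algHom_C]
  rw [taylor_eq, MvPolynomial.aeval_def, MvPolynomial.eval₂_eq']
  refine dvd_sum fun α _ ↦ ?_
  by_cases hα : ∑ i, α i < d
  · simp [hQ α hα]
  refine Dvd.dvd.mul_left ((pow_dvd_pow _ (not_lt.1 hα)).trans ?_) _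
  rw [← prod_pow_eq_pow_sum]
  exact prod_dvd_prod_of_dvd _ _ fun i _ ↦ pow_dvd_pow_of_dvd (dvd_iff_isRoot.2 (by simp [hy])) _

theorem prod_X_sub_C_pow_dvd [IsDomain O] {T : Type*} {s : Finset T} {z : T → O}
    (hz : Set.InjOn z s) {d : ℕ} {f : O[X]} (h : ∀ t ∈ s, (X - C (z t)) ^ d ∣ f) :
    ∏ t ∈ s, (X - C (z t)) ^ d ∣ f := by
  classical
  rcases eq_or_ne f 0 with rfl | hf
  · exact dvd_zero _
  have hprod : ∏ t ∈ s, (X - C (z t)) ^ d = ((d • s.val.map z).map fun a ↦ X - C a).prod := by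
    rw [Multiset.map_nsmul, Multiset.prod_nsmul, Multiset.map_map, Finset.prod_pow]
    rfl
  rw [hprod, Multiset.prod_X_sub_C_dvd_iff_le_roots hf, Multiset.le_iff_count]
  intro a
  rw [Multiset.count_nsmul, count_roots]
  by_cases ha : a ∈ s.val.map z
  · obtain ⟨t, ht, rfl⟩ := Multiset.mem_map.1 ha
    have hnodup : (s.val.map z).Nodup := Multiset.Nodup.map_on (fun _ hx _ hy ↦ hz hx hy) s.nodup
    rw [Multiset.count_eq_one_of_mem hnodup ha, mul_one, le_rootMultiplicity_iff hf]
    exact h t ht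
  · rw [Multiset.count_eq_zero_of_notMem ha, mul_zero]
    exact Nat.zero_le _

/-- The `j`-th Taylor coefficient at `1` of the residue modulo `P`. It vanishes on the multiples of
`P`, and still reduces to a Taylor coefficient when `P` reduces to a power of `X - 1`. -/
noncomputable def residueCoeff (P : O[X]) (j : ℕ) : O[X] →ₗ[O] O :=
  lcoeff O j ∘ₗ taylor 1 ∘ₗ modByMonicHom P

theorem residueCoeff_eq_zero_of_dvd {P : O[X]} (hP : P.Monic) (j : ℕ) {f : O[X]} (h : P ∣ f) :
    residueCoeff P j f = 0 := by
  simp [residueCoeff, (modByMonic_eq_zero_iff_dvd hP).2 h]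

variable {F : Type*} [Field F] {π : O →+* F}

theorem map_residueCoeff {P : O[X]} {D j : ℕ} (hPπ : P.map π = (X - 1) ^ D)
    (hj : j < D) (f : O[X]) : π (residueCoeff P j f) = (taylor 1 (f.map π)).coeff j := by
  have hdiv := congrArg (fun g ↦ (taylor 1 (g.map π)).coeff j) (modByMonic_add_div f P)
  simp only [Polynomial.map_add, Polynomial.map_mul, hPπ, map_add, taylor_mul, taylor_pow, map_sub,
    taylor_X, taylor_one, C_1, add_sub_cancel_right, coeff_add, coeff_X_pow_mul', if_neg hj.not_ge,
    add_zero] at hdiv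
  rw [← hdiv, ← map_one π, ← map_taylor, coeff_map]
  simp [residueCoeff]

theorem map_residueCoeff_aeval {P : O[X]} {D j : ℕ} (hPπ : P.map π = (X - 1) ^ D)
    (hj : j < D) {y : ι → O[X]} {u : ι → ℕ} (hy : ∀ i, (y i).map π = X ^ u i)
    (Q : MvPolynomial ι O) :
    π (residueCoeff P j (MvPolynomial.aeval y Q)) = curveCoeff F u j (Q.map π) := by
  have hcurve : taylor 1 ((MvPolynomial.aeval y Q).map π) =
      MvPolynomial.aeval (fun i ↦ (1 + X : F[X]) ^ u i) (Q.map π) := by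
    induction Q using MvPolynomial.induction_on with
    | C a => simp [MvPolynomial.algHom_C]
    | add Q Q' hQ hQ' => simp only [map_add, Polynomial.map_add, hQ, hQ']
    | mul_X Q i hQ => simp [hQ, hy, add_comm (X : F[X])]
  rw [map_residueCoeff hPπ hj, hcurve]
  rfl

theorem card_le_of_hasRichLine [IsDomain O] [Fintype ι] [DecidableEq ι]
    (hπ : Function.Surjective π) {N : ℕ} [NeZero N] {ζ : O} (hζ : IsPrimitiveRoot ζ N)
    (hζπ : π ζ = 1) {S : Finset (ι → ZMod N)} {B : Type*} [Fintype B] {u : B → ι → ℕ} {d : ℕ}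
    {j τ : B → ℕ} (hj : ∀ b, j b < d * τ b)
    (hind : LinearIndependent F fun b ↦ curveCoeff F (u b) (j b))
    (hS : ∀ b, HasRichLine S (fun i ↦ (u b i : ZMod N)) (τ b)) :
    Fintype.card B ≤ #(multiIndicesLT ι d) * #S := by
  choose a T hT hTS using hS
  let χ : AddChar (ZMod N) O := AddChar.zmodChar N hζ.pow_eq_one
  have χ_inj : Function.Injective χ := fun t t' h ↦ ZMod.val_injective N <|
    hζ.pow_inj t.val_lt t'.val_lt h
  have χπ (t : ZMod N) : π (χ t) = 1 := by simp [χ, AddChar.zmodChar_apply, hζπ]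
  let y (b : B) (i : ι) : O[X] := C (χ (a b i)) * X ^ u b i
  have y_eval (b : B) (i : ι) (t : ZMod N) :
      (y b i).eval (χ t) = χ ((a b + t • fun i ↦ (u b i : ZMod N)) i) := by
    simp [y, AddChar.map_add_eq_mul, mul_comm t, ← nsmul_eq_mul, AddChar.map_nsmul_eq_pow]
  let P (b : B) : O[X] := ∏ t ∈ T b, (X - C (χ t)) ^ d
  have P_monic (b : B) : (P b).Monic := monic_prod_of_monic _ _ fun t _ ↦ (monic_X_sub_C _).pow _
  have Pπ (b : B) : (P b).map π = (X - 1) ^ (d * #(T b)) := by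
    simp [P, Polynomial.map_prod, χπ, pow_mul]
  let Ψ : MvPolynomial ι O →ₗ[O] B → O :=
    .pi fun b ↦ residueCoeff (P b) (j b) ∘ₗ (MvPolynomial.aeval (y b)).toLinearMap
  let E : MvPolynomial ι O →ₗ[O] multiIndicesLT ι d × S → O :=
    .pi fun αx ↦ MvPolynomial.lcoeff O αx.1.1 ∘ₗ (mvTaylor (χ ∘ αx.2.1)).toLinearMap
  have ker_le : LinearMap.ker E ≤ LinearMap.ker Ψ := by
    intro Q hQ
    ext b
    refine residueCoeff_eq_zero_of_dvd (P_monic b) _ <|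
      prod_X_sub_C_pow_dvd χ_inj.injOn fun t ht ↦ ?_
    refine X_sub_C_pow_dvd_aeval (fun α hα ↦ ?_) fun i ↦ y_eval b i t
    exact congrFun hQ (⟨α, mem_multiIndicesLT.2 hα⟩, ⟨_, hTS b t ht⟩)
  have nondegenerate (c : B → F) (hc : ∀ Q, c ⬝ᵥ (π ∘ Ψ Q) = 0) : c = 0 := by
    refine funext (Fintype.linearIndependent_iff.1 hind c (LinearMap.ext fun Q ↦ ?_))
    obtain ⟨Q, rfl⟩ := MvPolynomial.map_surjective π hπ Q
    have hjT (b : B) : j b < d * #(T b) := (hj b).trans_le (Nat.mul_le_mul_left d (hT b))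
    have y_map (b : B) (i : ι) : (y b i).map π = X ^ u b i := by simp [y, χπ]
    simpa [Ψ, dotProduct, map_residueCoeff_aeval (Pπ _) (hjT _) (y_map _)] using hc Q
  simpa using card_le_card_of_ker_le hπ Ψ E ker_le nondegenerate

theorem exists_isPrimitiveRoot_map_eq_one (p k : ℕ) [hp : Fact p.Prime] :
    ∃ (O F : Type) (_ : CommRing O) (_ : IsDomain O) (_ : Field F) (_ : CharP F p) (π : O →+* F)
      (ζ : O), Function.Surjective π ∧ IsPrimitiveRoot ζ (p ^ k) ∧ π ζ = 1 := by
  have hpk : p ^ k ≠ 0 := pow_ne_zero _ hp.out.ne_zero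
  let O := integralClosure ℤ ℂ
  obtain ⟨z, hz⟩ : ∃ z : ℂ, IsPrimitiveRoot z (p ^ k) := ⟨_, Complex.isPrimitiveRoot_exp _ hpk⟩
  let ζ : O := ⟨z, hz.isIntegral (Nat.pos_of_ne_zero hpk)⟩
  have hζ : IsPrimitiveRoot ζ (p ^ k) := .of_map_of_injective (f := O.val) hz Subtype.val_injective
  obtain ⟨I, hI, hover⟩ :=
    Ideal.exists_maximal_ideal_liesOver_of_isIntegral (S := O) (Ideal.span {(p : ℤ)})
  let : Field (O ⧸ I) := Ideal.Quotient.field I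
  have hpI : ((p : ℕ) : O ⧸ I) = 0 := by
    have : algebraMap ℤ O p ∈ I :=
      (Ideal.mem_of_liesOver I _ _).1 (Ideal.mem_span_singleton_self (p : ℤ))
    simpa using Ideal.Quotient.eq_zero_iff_mem.2 this
  have : CharP (O ⧸ I) p := ringChar.of_eq (CharP.ringChar_of_prime_eq_zero hp.out hpI)
  refine ⟨O, O ⧸ I, inferInstance, inferInstance, inferInstance, this, Ideal.Quotient.mk I, ζ,
    Ideal.Quotient.mk_surjective, hζ, ?_⟩
  have hpow : Ideal.Quotient.mk I ζ ^ (p ^ k * 1) = 1 := by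
    rw [mul_one, ← map_pow, hζ.pow_eq_one, map_one]
  simpa using (ExpChar.pow_prime_pow_mul_eq_one_iff p k 1 _).1 hpow

end RankMethod

section UnimodularVectors

variable (ι R : Type*) [Fintype ι] [DecidableEq ι] [CommRing R] [Fintype R]

open Classical in
/-- The unimodular vectors, i.e. those whose coordinates generate the unit ideal; over `ℤ/Nℤ` they
are the primitive vectors. -/
noncomputable def unimodularVecs : Finset (ι → R) :=
  {u | ∃ v : ι → R, v ⬝ᵥ u = 1}

variable {ι R}

theorem mem_unimodularVecs {u : ι → R} : u ∈ unimodularVecs ι R ↔ ∃ v : ι → R, v ⬝ᵥ u = 1 := by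
  simp [unimodularVecs]

theorem mulVec_mem_unimodularVecs (g : GL ι R) {u : ι → R} :
    g.1 *ᵥ u ∈ unimodularVecs ι R ↔ u ∈ unimodularVecs ι R := by
  have mulVec_mem (g : GL ι R) {u : ι → R} (hu : u ∈ unimodularVecs ι R) :
      g.1 *ᵥ u ∈ unimodularVecs ι R := by
    obtain ⟨v, hv⟩ := mem_unimodularVecs.1 hu
    refine mem_unimodularVecs.2 ⟨v ᵥ* g⁻¹.1, ?_⟩
    rw [dotProduct_mulVec, vecMul_vecMul, Units.inv_mul, vecMul_one, hv]
  refine ⟨fun h ↦ ?_, mulVec_mem g⟩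
  simpa [mulVec_mulVec] using mulVec_mem g⁻¹ h

theorem exists_mulVec_single_eq [IsLocalRing R] (i₀ : ι) {u : ι → R}
    (hu : u ∈ unimodularVecs ι R) : ∃ g : GL ι R, g.1 *ᵥ Pi.single i₀ 1 = u := by
  obtain ⟨v, hv⟩ := mem_unimodularVecs.1 hu
  obtain ⟨i, -, hi⟩ := IsLocalRing.exists_of_isUnit_sum (hv ▸ isUnit_one : IsUnit (v ⬝ᵥ u))
  let A : Matrix ι ι R := (updateCol 1 i u).submatrix id (Equiv.swap i₀ i)
  have hA : IsUnit A := by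
    rw [isUnit_iff_isUnit_det, det_permute', ← cramer_apply, cramer_one]
    exact ((Units.isUnit _).map (Int.castRingHom R)).mul (isUnit_of_mul_isUnit_right hi)
  refine ⟨hA.unit, ?_⟩
  ext i'
  simp [A]

theorem exists_mulVec_eq [IsLocalRing R] {u u' : ι → R} (hu : u ∈ unimodularVecs ι R)
    (hu' : u' ∈ unimodularVecs ι R) : ∃ g : GL ι R, g.1 *ᵥ u = u' := by
  rcases isEmpty_or_nonempty ι with _ | ⟨⟨i₀⟩⟩
  · exact ⟨1, Subsingleton.elim _ _⟩
  obtain ⟨g, rfl⟩ := exists_mulVec_single_eq i₀ hu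
  obtain ⟨g', rfl⟩ := exists_mulVec_single_eq i₀ hu'
  exact ⟨g' * g⁻¹, by rw [mulVec_mulVec, ← Units.val_mul, inv_mul_cancel_right]⟩

theorem card_unimodularVecs_nsmul_sum_mulVec [IsLocalRing R] [Fintype (GL ι R)] {M : Type*}
    [AddCommMonoid M] {x : ι → R} (hx : x ∈ unimodularVecs ι R) (h : (ι → R) → M) :
    #(unimodularVecs ι R) • ∑ g : GL ι R, h (g.1 *ᵥ x) =
      Fintype.card (GL ι R) • ∑ u ∈ unimodularVecs ι R, h u := by
  have sum_eq : ∀ u ∈ unimodularVecs ι R,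
      ∑ g : GL ι R, h (g.1 *ᵥ u) = ∑ g : GL ι R, h (g.1 *ᵥ x) := by
    intro u hu
    obtain ⟨g₀, rfl⟩ := exists_mulVec_eq hx hu
    exact Fintype.sum_equiv (Equiv.mulRight g₀) _ _ fun g ↦ by simp [mulVec_mulVec]
  have sum_mulVec (g : GL ι R) :
      ∑ u ∈ unimodularVecs ι R, h (g.1 *ᵥ u) = ∑ u ∈ unimodularVecs ι R, h u :=
    sum_nbij' (g.1 *ᵥ ·) (g⁻¹.1 *ᵥ ·) (fun u hu ↦ (mulVec_mem_unimodularVecs g).2 hu)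
      (fun u hu ↦ (mulVec_mem_unimodularVecs g⁻¹).2 hu) (by simp [mulVec_mulVec])
      (by simp [mulVec_mulVec]) fun _ _ ↦ rfl
  calc #(unimodularVecs ι R) • ∑ g : GL ι R, h (g.1 *ᵥ x)
      = ∑ u ∈ unimodularVecs ι R, ∑ g : GL ι R, h (g.1 *ᵥ u) := by
        rw [sum_congr rfl sum_eq, sum_const]
    _ = Fintype.card (GL ι R) • ∑ u ∈ unimodularVecs ι R, h u := by
        rw [sum_comm, sum_congr rfl fun g _ ↦ sum_mulVec g, sum_const, card_univ]

open Classical in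
theorem sum_card_filter_le_of_mulVec [IsLocalRing R] {B : Type*} [Fintype B] {x : B → ι → R}
    {rich : (ι → R) → B → Prop} {M : ℕ} (hx : ∀ b, x b ∈ unimodularVecs ι R)
    (h : ∀ g : GL ι R, #{b | rich (g.1 *ᵥ x b) b} ≤ M) :
    ∑ u ∈ unimodularVecs ι R, #{b | rich u b} ≤ M * #(unimodularVecs ι R) := by
  let U := unimodularVecs ι R
  have : Fintype.card (GL ι R) * ∑ u ∈ U, #{b | rich u b} ≤ Fintype.card (GL ι R) * (M * #U) :=
    calc Fintype.card (GL ι R) * ∑ u ∈ U, #{b | rich u b}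
        = ∑ b, Fintype.card (GL ι R) • ∑ u ∈ U, if rich u b then 1 else 0 := by
          simp only [card_filter, smul_eq_mul, ← mul_sum]
          rw [sum_comm]
      _ = ∑ b, #U • ∑ g : GL ι R, if rich (g.1 *ᵥ x b) b then 1 else 0 :=
          sum_congr rfl fun b _ ↦ (card_unimodularVecs_nsmul_sum_mulVec (hx b) _).symm
      _ = #U * ∑ g : GL ι R, #{b | rich (g.1 *ᵥ x b) b} := by
          simp only [card_filter, smul_eq_mul, ← mul_sum]
          rw [sum_comm]
      _ ≤ #U * ∑ _g : GL ι R, M := by gcongr with g; exact h g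
      _ = Fintype.card (GL ι R) * (M * #U) := by
          rw [sum_const, card_univ, smul_eq_mul, mul_left_comm, mul_comm #U]
  exact Nat.le_of_mul_le_mul_left this Fintype.card_pos

end UnimodularVectors

theorem exists_generalLinearGroup_map_eq {ι A R : Type*} [Fintype ι] [DecidableEq ι] [CommRing A]
    [CommRing R] {φ : A →+* R} [IsLocalHom φ] (hφ : Function.Surjective φ) (g : GL ι R) :
    ∃ g' : GL ι A, g'.map φ = g := by
  choose σ hσ using hφ
  have map_eq : (g.1.map σ).map φ = g.1 := by ext; simp [hσ]
  have isUnit : IsUnit (g.1.map σ) := by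
    rw [isUnit_iff_isUnit_det, ← isUnit_map_iff φ, φ.map_det, RingHom.mapMatrix_apply, map_eq]
    exact isUnits_det_units g
  exact ⟨isUnit.unit, Units.ext map_eq⟩

theorem isLocalRing_zmod_prime_pow (p : ℕ) [hp : Fact p.Prime] {k : ℕ} (hk : k ≠ 0) :
    IsLocalRing (ZMod (p ^ k)) :=
  have : Fact (1 < p ^ k) := ⟨Nat.one_lt_pow hk hp.out.one_lt⟩
  .of_surjective' (PadicInt.toZModPow (p := p) k) (ZMod.ringHom_surjective _)

open Classical in
/-- A family of richness thresholds `τ b` such that, on average over the directions, a set has lines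
meeting only `A * #S` of the thresholds, while a line with `s` points meets at least `A * (c * s)ⁿ`
of them. This is a Kakeya estimate in a form that can be summed over the fibres of a product. -/
structure IsThresholdFamily (ι Q : Type*) [Fintype ι] [DecidableEq ι] [CommRing Q] [Fintype Q]
    (A c : ℝ) {B : Type*} [Fintype B] (τ : B → ℕ) : Prop where
  sum_card_le (S : Finset (ι → Q)) :
    ∑ u ∈ unimodularVecs ι Q, (#{b | HasRichLine S u (τ b)} : ℝ) ≤
      A * #S * #(unimodularVecs ι Q)
  mul_pow_le_card {s : ℕ} (hs : s ≤ Fintype.card Q) :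
    A * (c * s) ^ Fintype.card ι ≤ #{b | τ b ≤ s}

section PrimePower

variable {ι : Type*} [Fintype ι] [DecidableEq ι]

/-- The richness from which a line in the direction of `b` enters the rank argument with vanishing
order `n`. -/
def levelThreshold (p : ℕ) (i₀ : ι) (b : ι →₀ ℕ) : ℕ :=
  directionLevel p i₀ b / Fintype.card ι + 1

theorem directionLevel_lt_mul_levelThreshold (p : ℕ) (i₀ : ι) (b : ι →₀ ℕ) :
    directionLevel p i₀ b < Fintype.card ι * levelThreshold p i₀ b :=
  Nat.lt_mul_div_succ _ (Fintype.card_pos_iff.2 ⟨i₀⟩)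

theorem levelThreshold_le_iff {p : ℕ} {i₀ : ι} {b : ι →₀ ℕ} {s : ℕ} :
    levelThreshold p i₀ b ≤ s ↔ directionLevel p i₀ b < Fintype.card ι * s := by
  have : 0 < Fintype.card ι := Fintype.card_pos_iff.2 ⟨i₀⟩
  rw [levelThreshold, Nat.succ_le_iff, Nat.div_lt_iff_lt_mul this, mul_comm]

variable {p k l : ℕ} [hp : Fact p.Prime]

-- Orders of vanishing up to `n * p ^ k` occur, and Taylor coefficients of order less than `p ^ l`
-- depend on the direction modulo `p ^ l`; hence the lift of `g` to `ℤ/p^lℤ`.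
theorem card_le_of_hasRichLine_mulVec (hk : k ≠ 0) (hl : Fintype.card ι * p ^ k ≤ p ^ l) (i₀ : ι)
    (g : GL ι (ZMod (p ^ k))) {S : Finset (ι → ZMod (p ^ k))} {B : Finset (ι →₀ ℕ)}
    (hB : ∀ b ∈ B, HasRichLine S (g.1 *ᵥ fun i ↦ (normalizedDirection i₀ b i : ZMod (p ^ k)))
      (levelThreshold p i₀ b)) :
    #B ≤ #(multiIndicesLT ι (Fintype.card ι)) * #S := by
  have : NeZero (p ^ k) := ⟨pow_ne_zero k hp.out.ne_zero⟩
  have : NeZero (p ^ l) := ⟨pow_ne_zero l hp.out.ne_zero⟩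
  have hkl : k ≤ l := (Nat.pow_le_pow_iff_right hp.out.one_lt).1 <|
    (Nat.le_mul_of_pos_left _ (Fintype.card_pos_iff.2 ⟨i₀⟩)).trans hl
  have := isLocalRing_zmod_prime_pow p hk
  have := isLocalRing_zmod_prime_pow p ((Nat.pos_of_ne_zero hk).trans_le hkl).ne'
  let φ : ZMod (p ^ l) →+* ZMod (p ^ k) := ZMod.castHom (pow_dvd_pow p hkl) _
  obtain ⟨g', rfl⟩ := exists_generalLinearGroup_map_eq (ZMod.ringHom_surjective φ) g
  obtain ⟨O, F, _, _, _, _, π, ζ, hπ, hζ, hζπ⟩ := exists_isPrimitiveRoot_map_eq_one p k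
  have level_lt (b : B) : directionLevel p i₀ b < p ^ l :=
    (levelThreshold_le_iff.1 ((hB b b.2).le_card.trans_eq (ZMod.card _))).trans_le hl
  have independent := linearIndependent_curveCoeff_mulVec p level_lt
    ((linearIndependent_curveCoeff F p i₀).comp _ Subtype.val_injective) g'
  have rich (b : B) : HasRichLine S (fun i ↦ (((g'.1 *ᵥ
      fun i' ↦ (normalizedDirection i₀ b i' : ZMod (p ^ l))) i).val : ZMod (p ^ k)))
      (levelThreshold p i₀ b) := by
    convert hB b b.2 using 2 with i
    rw [ZMod.natCast_val]
    refine (RingHom.map_mulVec φ g'.1 _ i).trans ?_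
    simp [Function.comp_def]
  simpa using card_le_of_hasRichLine hπ hζ hζπ
    (fun b : B ↦ directionLevel_lt_mul_levelThreshold p i₀ b) independent rich

theorem levelThreshold_le_of_mem_multiIndicesLT (hl : l ≠ 0) (i₀ : ι) {b : ι →₀ ℕ} {s : ℕ}
    (hs : Fintype.card ι * s ≤ p ^ l) (hb : b ∈ multiIndicesLT ι (Fintype.card ι * s ⌈/⌉ l)) :
    levelThreshold p i₀ b ≤ s := by
  have hbl : l * ∑ i, b i < Fintype.card ι * s := by
    rw [← not_le, ← ceilDiv_le_iff_le_mul (Nat.pos_of_ne_zero hl), not_le]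
    exact mem_multiIndicesLT.1 hb
  have coord_lt (i : ι) : b i < p ^ l :=
    calc b i ≤ ∑ i, b i := single_le_sum (fun i _ ↦ Nat.zero_le (b i)) (mem_univ i)
      _ ≤ l * ∑ i, b i := Nat.le_mul_of_pos_left _ (Nat.pos_of_ne_zero hl)
      _ < p ^ l := hbl.trans_le hs
  exact levelThreshold_le_iff.2 ((directionLevel_le p hl i₀ coord_lt).trans_lt hbl)

theorem isThresholdFamily_levelThreshold (hk : k ≠ 0) (hl : Fintype.card ι * p ^ k ≤ p ^ l)
    (i₀ : ι) [NeZero (p ^ k)] :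
    IsThresholdFamily ι (ZMod (p ^ k)) #(multiIndicesLT ι (Fintype.card ι)) (1 / (2 * l))
      fun b : multiIndicesLT ι (Fintype.card ι * p ^ k) ↦ levelThreshold p i₀ b where
  sum_card_le S := by
    classical
    have := isLocalRing_zmod_prime_pow p hk
    have := sum_card_filter_le_of_mulVec (R := ZMod (p ^ k))
      (M := #(multiIndicesLT ι (Fintype.card ι)) * #S)
      (x := fun (b : multiIndicesLT ι (Fintype.card ι * p ^ k)) i ↦ normalizedDirection i₀ b i)
      (rich := fun u b ↦ HasRichLine S u (levelThreshold p i₀ b))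
      (fun b ↦ mem_unimodularVecs.2 ⟨Pi.single i₀ 1, by simp [normalizedDirection]⟩) fun g ↦ by
        rw [← card_map (Function.Embedding.subtype _)]
        refine card_le_of_hasRichLine_mulVec hk hl i₀ g fun b hb ↦ ?_
        obtain ⟨b, hrich, rfl⟩ := mem_map.1 hb
        exact (mem_filter.1 hrich).2
    exact_mod_cast this
  mul_pow_le_card {s} hs := by
    classical
    rw [ZMod.card] at hs
    have hns : Fintype.card ι * s ≤ Fintype.card ι * p ^ k := Nat.mul_le_mul_left _ hs
    have hl₀ : l ≠ 0 := by
      rintro rfl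
      have : 1 * p ^ k ≤ 1 := (Nat.mul_le_mul_right _ (Fintype.card_pos_iff.2 ⟨i₀⟩)).trans hl
      exact this.not_gt (by simpa using Nat.one_lt_pow hk hp.out.one_lt)
    have : Nonempty ι := ⟨i₀⟩
    have ns_le : Fintype.card ι * s ≤ l * (Fintype.card ι * s ⌈/⌉ l) :=
      le_smul_ceilDiv (Nat.pos_of_ne_zero hl₀)
    refine (card_multiIndicesLT_mul_pow_le ι hl₀ ns_le).trans ?_
    rw [Nat.cast_le, ← card_map (Function.Embedding.subtype _)]
    refine card_le_card fun b hb ↦ mem_map.2 ⟨⟨b, ?_⟩, mem_filter.2 ⟨mem_univ _, ?_⟩, rfl⟩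
    · refine multiIndicesLT_mono ?_ hb
      exact (ceilDiv_le_iff_le_mul (Nat.pos_of_ne_zero hl₀)).2 <|
        hns.trans (Nat.le_mul_of_pos_left _ (Nat.pos_of_ne_zero hl₀))
    · exact levelThreshold_le_of_mem_multiIndicesLT hl₀ i₀ (hns.trans hl) hb

end PrimePower

section Fibers

variable {ι Q R : Type*} [Fintype ι] [DecidableEq ι] [Fintype Q] [Fintype R]

theorem sum_card_section {α β γ : Type*} [Fintype α] [Fintype β] [DecidableEq γ] (e : α × β ≃ γ)
    (T : Finset γ) : ∑ b, #{a | e (a, b) ∈ T} = #T := by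
  simp only [card_filter]
  rw [← Fintype.sum_prod_type_right' fun a b ↦ if e (a, b) ∈ T then 1 else 0, ← card_filter,
    ← card_map e.toEmbedding]
  congr 1
  ext c
  simp [mem_map_equiv]

open Classical in
/-- The fibre over `x'` of a subset of `Qⁿ × Rⁿ`. -/
noncomputable def fiberOver (S : Finset (ι → Q × R)) (x' : ι → R) : Finset (ι → Q) :=
  {x | Function.prod x x' ∈ S}

theorem sum_card_fiberOver (S : Finset (ι → Q × R)) : ∑ x', #(fiberOver S x') = #S := by
  classical
  convert sum_card_section (Equiv.arrowProdEquivProdArrow ι (fun _ ↦ Q) fun _ ↦ R).symm S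
  ext
  simp only [fiberOver, mem_filter_univ]
  rfl

variable [CommRing Q]

open Classical in
/-- The points over which the fibre contains `s` points of a line in direction `x`. -/
noncomputable def richFibers (S : Finset (ι → Q × R)) (x : ι → Q) (s : ℕ) : Finset (ι → R) :=
  {x' | HasRichLine (fiberOver S x') x s}

theorem mem_richFibers {S : Finset (ι → Q × R)} {x : ι → Q} {s : ℕ} {x' : ι → R} :
    x' ∈ richFibers S x s ↔ HasRichLine (fiberOver S x') x s := by
  simp [richFibers]

theorem richFibers_anti (S : Finset (ι → Q × R)) (x : ι → Q) : Antitone (richFibers S x) :=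
  fun _ _ hs _ h ↦ mem_richFibers.2 ((mem_richFibers.1 h).mono hs)

open Classical in
theorem IsThresholdFamily.sum_card_richFibers_le {A c : ℝ} {B : Type*} [Fintype B] {τ : B → ℕ}
    (hτ : IsThresholdFamily ι Q A c τ) (S : Finset (ι → Q × R)) :
    ∑ x ∈ unimodularVecs ι Q, ∑ b, (#(richFibers S x (τ b)) : ℝ) ≤
      A * #S * #(unimodularVecs ι Q) := by
  have swap (x : ι → Q) : ∑ b, (#(richFibers S x (τ b)) : ℝ) =
      ∑ x', (#{b | HasRichLine (fiberOver S x') x (τ b)} : ℝ) := by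
    simp only [richFibers, card_filter, Nat.cast_sum]
    exact sum_comm
  calc ∑ x ∈ unimodularVecs ι Q, ∑ b, (#(richFibers S x (τ b)) : ℝ)
      = ∑ x', ∑ x ∈ unimodularVecs ι Q, (#{b | HasRichLine (fiberOver S x') x (τ b)} : ℝ) := by
        rw [sum_congr rfl fun x _ ↦ swap x, sum_comm]
    _ ≤ ∑ x', A * #(fiberOver S x') * #(unimodularVecs ι Q) :=
        sum_le_sum fun x' _ ↦ hτ.sum_card_le _
    _ = A * #S * #(unimodularVecs ι Q) := by
        rw [← sum_card_fiberOver S, Nat.cast_sum, mul_sum, sum_mul]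

end Fibers

section LevelSets

open Classical in
/-- Every function on `R` with values at most `q` has a superlevel set which carries at least the
proportion `r` of its sum. -/
def LevelSetBound (R : Type*) [Fintype R] (q : ℕ) (r : ℝ) : Prop :=
  ∀ f : R → ℕ, (∀ t, f t ≤ q) → ∃ s ≤ q, r * ∑ t, (f t : ℝ) ≤ s * #{t | s ≤ f t}

theorem levelSetBound_of_unique (R : Type*) [Fintype R] [Unique R] (q : ℕ) :
    LevelSetBound R q 1 :=
  fun f hf ↦ ⟨f default, hf _, by simp [Finset.filter_true_of_mem]⟩

theorem sum_eq_sum_card_superlevel {R : Type*} [Fintype R] {q : ℕ} {f : R → ℕ}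
    (hf : ∀ t, f t ≤ q) : ∑ t, f t = ∑ s ∈ Icc 1 q, #{t | s ≤ f t} := by
  refine .trans (sum_congr rfl fun t _ ↦ ?_)
    (sum_card_bipartiteAbove_eq_sum_card_bipartiteBelow fun t s ↦ s ≤ f t)
  have : bipartiteAbove (fun t s ↦ s ≤ f t) (Icc 1 q) t = Icc 1 (f t) := by
    ext s
    simp only [mem_bipartiteAbove, mem_Icc]
    have := hf t
    lia
  simp [this]

-- If the bound failed at every level, summing over the levels would produce the harmonic sum.
theorem levelSetBound_log (R : Type*) [Fintype R] {q : ℕ} (hq : q ≠ 0) :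
    LevelSetBound R q (1 / (Real.log q + 1)) := by
  classical
  intro f hf
  by_contra! h
  have : 0 ≤ Real.log q := Real.log_natCast_nonneg q
  set M : ℝ := ∑ t, (f t : ℝ)
  have harmonic_le : ∑ s ∈ Icc 1 q, (s : ℝ)⁻¹ ≤ 1 + Real.log q := by
    simpa [harmonic_eq_sum_Icc] using harmonic_le_one_add_log q
  refine lt_irrefl M ?_
  calc M = ∑ s ∈ Icc 1 q, (#{t | s ≤ f t} : ℝ) := by
        simpa [M] using congrArg (Nat.cast (R := ℝ)) (sum_eq_sum_card_superlevel hf)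
    _ < ∑ s ∈ Icc 1 q, 1 / (Real.log q + 1) * M * (s : ℝ)⁻¹ := by
        refine sum_lt_sum_of_nonempty (nonempty_Icc.2 (Nat.one_le_iff_ne_zero.2 hq)) fun s hs ↦ ?_
        have hs := mem_Icc.1 hs
        rw [← div_eq_mul_inv, lt_div_iff₀' (by exact_mod_cast hs.1)]
        exact h s hs.2
    _ ≤ 1 / (Real.log q + 1) * M * (1 + Real.log q) := by
        rw [← mul_sum]
        gcongr
    _ = M := by field_simp; ring

theorem HasRichLine.exists_richFibers {ι Q R : Type*} [Fintype ι] [DecidableEq ι] [Fintype Q]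
    [Fintype R] [CommRing Q] [CommRing R] {r : ℝ} (hr : 0 ≤ r)
    (hlevel : LevelSetBound R (Fintype.card Q) r) {S : Finset (ι → Q × R)} {x : ι → Q} {y : ι → R}
    {m : ℕ} (h : HasRichLine S (Function.prod x y) m) :
    ∃ s ≤ Fintype.card Q, ∃ m' : ℕ, r * m ≤ s * m' ∧ HasRichLine (richFibers S x s) y m' := by
  classical
  obtain ⟨a, T, hT, hTS⟩ := h
  obtain ⟨s, hs, hsT⟩ := hlevel (fun t' ↦ #{t | (t, t') ∈ T}) fun _ ↦ card_le_univ _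
  have hmT : (m : ℝ) ≤ ∑ t', (#{t | (t, t') ∈ T} : ℝ) := by
    have : m ≤ ∑ t', #{t | (t, t') ∈ T} :=
      hT.trans_eq (sum_card_section (Equiv.refl (Q × R)) T).symm
    exact_mod_cast this
  refine ⟨s, hs, _, (mul_le_mul_of_nonneg_left hmT hr).trans hsT, Prod.snd ∘ a, _, le_rfl,
    fun t' ht' ↦ mem_richFibers.2 ⟨Prod.fst ∘ a, _, (mem_filter.1 ht').2, fun t ht ↦ ?_⟩⟩
  exact mem_filter.2 ⟨mem_univ _, hTS _ (mem_filter.1 ht).2⟩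

end LevelSets

section KakeyaBounds

variable (ι R : Type*) [Fintype ι] [DecidableEq ι] [CommRing R] [Fintype R]

/-- The Kakeya inequality with constant `C`, for sets with prescribed richness in each direction. -/
def KakeyaBound (C : ℝ) : Prop :=
  ∀ (S : Finset (ι → R)) (m : (ι → R) → ℕ),
    (∀ u ∈ unimodularVecs ι R, HasRichLine S u (m u)) →
      C * ∑ u ∈ unimodularVecs ι R, (m u : ℝ) ^ Fintype.card ι ≤ #S * #(unimodularVecs ι R)

theorem kakeyaBound_one_of_subsingleton [Nonempty ι] [Subsingleton R] : KakeyaBound ι R 1 := by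
  intro S m hm
  rw [one_mul, mul_comm, ← nsmul_eq_mul]
  refine sum_le_card_nsmul _ _ _ fun u hu ↦ ?_
  obtain ⟨a, T, hT, hTS⟩ := hm u hu
  have hm1 : m u ≤ 1 := hT.trans (card_le_one_of_subsingleton T)
  have hmS : m u ≤ #S := by
    obtain rfl | ⟨t, ht⟩ := T.eq_empty_or_nonempty
    · exact hT.trans (Nat.zero_le _)
    · exact hm1.trans (card_pos.2 ⟨_, hTS t ht⟩)
  exact_mod_cast (pow_le_of_le_one (Nat.zero_le _) hm1 Fintype.card_ne_zero).trans hmS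

variable {ι R}

theorem KakeyaBound.sum_ite_le [Nonempty ι] {C : ℝ} (h : KakeyaBound ι R C) {T : ℕ → Finset (ι → R)}
    (hT : Antitone T) {s m : (ι → R) → ℕ} (rich : ∀ y, HasRichLine (T (s y)) y (m y)) (t : ℕ) :
    C * ∑ y ∈ unimodularVecs ι R, (if t ≤ s y then (m y : ℝ) ^ Fintype.card ι else 0) ≤
      #(T t) * #(unimodularVecs ι R) := by
  convert h (T t) (fun y ↦ if t ≤ s y then m y else 0) fun y _ ↦ ?_ using 4
  · split_ifs <;> simp
  · split_ifs with ht
    · exact (rich y).subset (hT ht)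
    · exact hasRichLine_zero _ _

theorem IsThresholdFamily.mul_pow_le_sum_ite {Q : Type*} [CommRing Q] [Fintype Q] {A c : ℝ}
    {B : Type*} [Fintype B] {τ : B → ℕ} (hτ : IsThresholdFamily ι Q A c τ) (hA : 0 ≤ A)
    (hc : 0 ≤ c) {s m : ℕ} (hs : s ≤ Fintype.card Q) {x : ℝ} (hx : 0 ≤ x) (hxm : x ≤ s * m) :
    A * (c * x) ^ Fintype.card ι ≤ ∑ b, if τ b ≤ s then (m : ℝ) ^ Fintype.card ι else 0 := by
  classical
  calc A * (c * x) ^ Fintype.card ι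
      ≤ A * (c * (s * m)) ^ Fintype.card ι := by gcongr
    _ = A * (c * s) ^ Fintype.card ι * (m : ℝ) ^ Fintype.card ι := by
        rw [mul_assoc, ← mul_pow, mul_assoc c]
    _ ≤ #{b | τ b ≤ s} * (m : ℝ) ^ Fintype.card ι := by gcongr; exact hτ.mul_pow_le_card hs
    _ = ∑ b, if τ b ≤ s then (m : ℝ) ^ Fintype.card ι else 0 := by
        rw [← sum_filter, sum_const, nsmul_eq_mul]

end KakeyaBounds

section Products

variable {ι Q R : Type*} [Fintype ι] [DecidableEq ι] [CommRing Q] [CommRing R] [Fintype Q]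
  [Fintype R]

theorem prod_mem_unimodularVecs {x : ι → Q} {y : ι → R} :
    Function.prod x y ∈ unimodularVecs ι (Q × R) ↔
      x ∈ unimodularVecs ι Q ∧ y ∈ unimodularVecs ι R := by
  simp only [mem_unimodularVecs]
  constructor
  · rintro ⟨v, hv⟩
    exact ⟨⟨Prod.fst ∘ v, by simpa [dotProduct, Prod.fst_sum] using congrArg Prod.fst hv⟩,
      ⟨Prod.snd ∘ v, by simpa [dotProduct, Prod.snd_sum] using congrArg Prod.snd hv⟩⟩
  · rintro ⟨⟨v, hv⟩, ⟨w, hw⟩⟩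
    exact ⟨Function.prod v w, Prod.ext (by simpa [dotProduct, Prod.fst_sum] using hv)
      (by simpa [dotProduct, Prod.snd_sum] using hw)⟩

theorem sum_unimodularVecs_prod {M : Type*} [AddCommMonoid M] (f : (ι → Q × R) → M) :
    ∑ u ∈ unimodularVecs ι (Q × R), f u =
      ∑ x ∈ unimodularVecs ι Q, ∑ y ∈ unimodularVecs ι R, f (Function.prod x y) := by
  rw [← sum_product']
  exact sum_nbij' (fun u ↦ (Prod.fst ∘ u, Prod.snd ∘ u)) (fun xy ↦ Function.prod xy.1 xy.2)
    (fun u hu ↦ mem_product.2 (prod_mem_unimodularVecs.1 hu))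
    (fun xy hxy ↦ prod_mem_unimodularVecs.2 (mem_product.1 hxy)) (fun _ _ ↦ rfl) (fun _ _ ↦ rfl)
    fun _ _ ↦ rfl

theorem card_unimodularVecs_prod : #(unimodularVecs ι (Q × R)) =
    #(unimodularVecs ι Q) * #(unimodularVecs ι R) := by
  rw [card_eq_sum_ones, sum_unimodularVecs_prod, sum_const, sum_const, smul_eq_mul, smul_eq_mul,
    mul_one]

theorem KakeyaBound.prod [Nonempty ι] {A c r C : ℝ} {B : Type*} [Fintype B] {τ : B → ℕ}
    (hτ : IsThresholdFamily ι Q A c τ) (hA : 0 < A) (hc : 0 ≤ c) (hr : 0 ≤ r)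
    (hlevel : LevelSetBound R (Fintype.card Q) r) (hC : 0 ≤ C) (h : KakeyaBound ι R C) :
    KakeyaBound ι (Q × R) (C * (c * r) ^ Fintype.card ι) := by
  intro S m hm
  set n := Fintype.card ι
  set U := unimodularVecs ι Q
  set V := unimodularVecs ι R
  have rich (x : ι → Q) (y : ι → R) : ∃ s ≤ Fintype.card Q, ∃ m' : ℕ,
      (x ∈ U → y ∈ V → r * m (Function.prod x y) ≤ s * m') ∧
        HasRichLine (richFibers S x s) y m' := by
    by_cases hxy : x ∈ U ∧ y ∈ V
    · obtain ⟨s, hs, m', hm', hrich⟩ :=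
        (hm _ (prod_mem_unimodularVecs.2 hxy)).exists_richFibers hr hlevel
      exact ⟨s, hs, m', fun _ _ ↦ hm', hrich⟩
    · exact ⟨0, Nat.zero_le _, 0, fun hx hy ↦ (hxy ⟨hx, hy⟩).elim, hasRichLine_zero _ _⟩
  choose s hs m' hm' hrich using rich
  refine le_of_mul_le_mul_left ?_ hA
  rw [sum_unimodularVecs_prod, card_unimodularVecs_prod]
  calc A * (C * (c * r) ^ n * ∑ x ∈ U, ∑ y ∈ V, (m (Function.prod x y) : ℝ) ^ n)
      = C * ∑ x ∈ U, ∑ y ∈ V, A * (c * (r * m (Function.prod x y))) ^ n := by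
        simp only [← mul_sum, ← mul_assoc c, mul_pow _ (m _ : ℝ)]
        ring
    _ ≤ C * ∑ x ∈ U, ∑ y ∈ V, ∑ b, (if τ b ≤ s x y then (m' x y : ℝ) ^ n else 0) := by
        gcongr with x hx y hy
        exact hτ.mul_pow_le_sum_ite hA.le hc (hs x y) (by positivity) (hm' x y hx hy)
    _ = ∑ x ∈ U, ∑ b, C * ∑ y ∈ V, (if τ b ≤ s x y then (m' x y : ℝ) ^ n else 0) := by
        simp only [← mul_sum, sum_comm (s := V)]
    _ ≤ ∑ x ∈ U, ∑ b, (#(richFibers S x (τ b)) : ℝ) * #V :=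
        sum_le_sum fun x _ ↦ sum_le_sum fun b _ ↦
          h.sum_ite_le (richFibers_anti S x) (hrich x) (τ b)
    _ ≤ A * #S * #U * #V := by
        simp only [← sum_mul]
        gcongr
        exact hτ.sum_card_richFibers_le S
    _ = A * (#S * ((#U * #V : ℕ) : ℝ)) := by push_cast; ring

end Products

section RingEquiv

variable {ι R R' : Type*} [CommRing R] [CommRing R']

theorem HasRichLine.image_ringEquiv [DecidableEq (ι → R')] (e : R ≃+* R') {S : Finset (ι → R)}
    {u : ι → R} {m : ℕ} (h : HasRichLine S u m) : HasRichLine (S.image (e ∘ ·)) (e ∘ u) m := by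
  obtain ⟨a, T, hT, hTS⟩ := h
  refine ⟨e ∘ a, T.map e.toEquiv.toEmbedding, hT.trans_eq (card_map _).symm, ?_⟩
  rintro t' ht'
  obtain ⟨t, ht, rfl⟩ := mem_map.1 ht'
  refine mem_image.2 ⟨_, hTS t ht, ?_⟩
  ext i
  simp

variable [Fintype ι] [DecidableEq ι] [Fintype R] [Fintype R']

theorem comp_mem_unimodularVecs (φ : R →+* R') {u : ι → R} (hu : u ∈ unimodularVecs ι R) :
    φ ∘ u ∈ unimodularVecs ι R' := by
  obtain ⟨v, hv⟩ := mem_unimodularVecs.1 hu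
  exact mem_unimodularVecs.2 ⟨φ ∘ v, by rw [← φ.map_dotProduct, hv, map_one]⟩

theorem sum_unimodularVecs_comp (e : R ≃+* R') {M : Type*} [AddCommMonoid M] (f : (ι → R') → M) :
    ∑ u ∈ unimodularVecs ι R, f (e ∘ u) = ∑ u ∈ unimodularVecs ι R', f u :=
  sum_nbij' (e ∘ ·) (e.symm ∘ ·) (fun _ ↦ comp_mem_unimodularVecs e.toRingHom)
    (fun _ ↦ comp_mem_unimodularVecs e.symm.toRingHom) (fun u _ ↦ by ext; simp)
    (fun u _ ↦ by ext; simp) fun _ _ ↦ rfl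

theorem KakeyaBound.of_ringEquiv (e : R ≃+* R') {C : ℝ} (h : KakeyaBound ι R C) :
    KakeyaBound ι R' C := by
  classical
  intro S m hm
  have comp_injective : Function.Injective ((e.symm ∘ ·) : (ι → R') → ι → R) :=
    e.symm.injective.comp_left
  have card_eq : #(unimodularVecs ι R) = #(unimodularVecs ι R') := by
    rw [card_eq_sum_ones, card_eq_sum_ones, ← sum_unimodularVecs_comp e]
  have bound := h (S.image (e.symm ∘ ·)) (fun u ↦ m (e ∘ u)) fun u hu ↦ by
    convert (hm (e ∘ u) (comp_mem_unimodularVecs e.toRingHom hu)).image_ringEquiv e.symm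
    ext i
    simp
  rwa [card_image_of_injective _ comp_injective, card_eq,
    sum_unimodularVecs_comp e fun u ↦ (m u : ℝ) ^ Fintype.card ι] at bound

end RingEquiv

section ZMod

variable {ι : Type*} [Fintype ι] [DecidableEq ι] [Nonempty ι]

theorem KakeyaBound.zmod_mul {N p k l M : ℕ} [NeZero N] [NeZero M] [Fact p.Prime]
    (hN : N = p ^ k * M) (hk : k ≠ 0) (hl : Fintype.card ι * p ^ k ≤ p ^ l)
    (hpM : (p ^ k).Coprime M) {r C : ℝ} (hr : 0 ≤ r)
    (hlevel : LevelSetBound (ZMod M) (p ^ k) r) (hC : 0 ≤ C) (h : KakeyaBound ι (ZMod M) C) :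
    KakeyaBound ι (ZMod N) (C * (1 / (2 * l) * r) ^ Fintype.card ι) := by
  subst hN
  have multiIndices_card_pos : 0 < #(multiIndicesLT ι (Fintype.card ι)) :=
    card_pos.2 ⟨0, mem_multiIndicesLT.2 (by simp [Fintype.card_pos])⟩
  refine .of_ringEquiv (ZMod.chineseRemainder hpM).symm
    (.prod (isThresholdFamily_levelThreshold hk hl (Classical.arbitrary ι))
      (by exact_mod_cast multiIndices_card_pos) (by positivity) hr ?_ hC h)
  rwa [ZMod.card]

theorem kakeyaBound_zmod_prod_prime_pow {κ : Type*} [DecidableEq κ] {p k l : κ → ℕ}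
    (hp : ∀ i, (p i).Prime) (hinj : Function.Injective p) (hk : ∀ i, k i ≠ 0)
    (hl : ∀ i, Fintype.card ι * p i ^ k i ≤ p i ^ l i) {z : κ} {s : Finset κ} (hz : z ∉ s) {N : ℕ}
    [NeZero N] (hN : N = ∏ i ∈ insert z s, p i ^ k i) :
    KakeyaBound ι (ZMod N) (((∏ i ∈ s, 1 / (k i * Real.log (p i) + 1)) *
      ∏ i ∈ insert z s, 1 / (2 * (l i : ℝ))) ^ Fintype.card ι) := by
  have prime (i : κ) : Fact (p i).Prime := ⟨hp i⟩
  have coprime {i : κ} {t : Finset κ} (hi : i ∉ t) :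
      (p i ^ k i).Coprime (∏ j ∈ t, p j ^ k j) :=
    Nat.Coprime.prod_right fun j hj ↦ .pow _ _ <| (Nat.coprime_primes (hp i) (hp j)).2 fun h ↦
      hi (hinj h ▸ hj)
  induction s using Finset.induction_on generalizing N with
  | empty =>
    simpa using (kakeyaBound_one_of_subsingleton ι (ZMod 1)).zmod_mul (N := N) (by simpa using hN)
      (hk z) (hl z) (Nat.coprime_one_right _) zero_le_one (levelSetBound_of_unique (ZMod 1) _)
      zero_le_one
  | insert i s hi ih =>
    obtain ⟨hzi, hzs⟩ : z ≠ i ∧ z ∉ s := by simpa [not_or] using hz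
    have hi' : i ∉ insert z s := by simp [hzi.symm, hi]
    set M := ∏ j ∈ insert z s, p j ^ k j with hM
    have : NeZero M := ⟨prod_ne_zero_iff.2 fun j _ ↦ pow_ne_zero _ (hp j).ne_zero⟩
    have level := levelSetBound_log (ZMod M) (pow_ne_zero (k i) (hp i).ne_zero)
    rw [Nat.cast_pow, Real.log_pow] at level
    rw [insert_comm, prod_insert hi', ← hM] at hN
    convert (ih hzs hM).zmod_mul hN (hk i) (hl i) (coprime hi') (by positivity) level
      (by positivity) using 1
    rw [insert_comm, prod_insert hi, prod_insert hi', ← mul_pow]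
    ring

end ZMod

section ProjectiveSpace

section UnitMultiples

variable {ι R : Type*} [Fintype ι] [DecidableEq ι] [CommRing R] [Fintype R]

theorem units_smul_mem_unimodularVecs (c : Rˣ) {u : ι → R} (hu : u ∈ unimodularVecs ι R) :
    (c : R) • u ∈ unimodularVecs ι R := by
  obtain ⟨v, hv⟩ := mem_unimodularVecs.1 hu
  exact mem_unimodularVecs.2 ⟨(↑c⁻¹ : R) • v, by simp [hv]⟩

theorem smul_left_injective_of_mem_unimodularVecs {u : ι → R} (hu : u ∈ unimodularVecs ι R) :
    Function.Injective fun c : R ↦ c • u := by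
  obtain ⟨v, hv⟩ := mem_unimodularVecs.1 hu
  intro c c' h
  simpa [hv] using congrArg (v ⬝ᵥ ·) h

end UnitMultiples

variable {N n : ℕ} [NeZero N]

theorem isPrimitiveVec_iff_mem_unimodularVecs {u : Fin n → ZMod N} :
    IsPrimitiveVec u ↔ u ∈ unimodularVecs (Fin n) (ZMod N) :=
  mem_unimodularVecs.symm

theorem lineF_units_smul (a u : Fin n → ZMod N) (c : (ZMod N)ˣ) :
    lineF a ((c : ZMod N) • u) = lineF a u := by
  ext x
  simp only [lineF, mem_image_univ_iff_mem_range, smul_smul]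
  exact Set.ext_iff.1 ((Units.mulRight c).surjective.range_comp fun t ↦ a + t • u) x

theorem hasRichLine_of_le_card_lineF_inter {a u : Fin n → ZMod N} {S : Finset (Fin n → ZMod N)}
    {m : ℕ} (h : m ≤ #(lineF a u ∩ S)) : HasRichLine S u m := by
  refine ⟨a, filter (a + · • u ∈ S) univ, ?_, by simp⟩
  rw [lineF, ← filter_mem_eq_inter, filter_image] at h
  exact h.trans card_image_le

theorem IsProjRepSet.nsmul_sum {P : Finset (Fin n → ZMod N)} (hP : IsProjRepSet N n P)
    {M : Type*} [AddCommMonoid M] {f : (Fin n → ZMod N) → M}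
    (hf : ∀ (c : (ZMod N)ˣ) u, f ((c : ZMod N) • u) = f u) :
    Fintype.card (ZMod N)ˣ • ∑ u ∈ P, f u = ∑ u ∈ unimodularVecs (Fin n) (ZMod N), f u := by
  have mem {w} (hw : w ∈ P) : w ∈ unimodularVecs (Fin n) (ZMod N) :=
    isPrimitiveVec_iff_mem_unimodularVecs.1 (hP.1 w hw)
  rw [← card_univ, ← sum_const, ← sum_product' univ P fun _ u ↦ f u]
  refine sum_nbij (fun x ↦ (x.1 : ZMod N) • x.2) ?_ ?_ ?_ fun x _ ↦ (hf x.1 x.2).symm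
  · exact fun x hx ↦ units_smul_mem_unimodularVecs _ (mem (mem_product.1 hx).2)
  · rintro ⟨c, w⟩ hx ⟨c', w'⟩ hx' (h : (c : ZMod N) • w = (c' : ZMod N) • w')
    have hw : w ∈ P := (mem_product.1 hx).2
    have hw' : w' ∈ P := (mem_product.1 hx').2
    obtain rfl : w = w' := by
      refine (hP.2 w (hP.1 w hw)).unique ⟨hw, 1, by simp⟩ ⟨hw', c⁻¹ * c', ?_⟩
      rw [Units.val_mul, mul_smul, ← h, smul_smul, Units.inv_mul, one_smul]
    exact congrArg (·, w) (Units.ext (smul_left_injective_of_mem_unimodularVecs (mem hw) h))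
  · intro u hu
    obtain ⟨w, ⟨hw, c, hc⟩, -⟩ := hP.2 u (isPrimitiveVec_iff_mem_unimodularVecs.2 hu)
    exact ⟨(c, w), by simpa using hw, hc.symm⟩

theorem IsProjRepSet.card_pos {P : Finset (Fin n → ZMod N)} (hP : IsProjRepSet N n P)
    (hn : n ≠ 0) : 0 < #P := by
  have : NeZero n := ⟨hn⟩
  have primitive : IsPrimitiveVec (N := N) (Pi.single (0 : Fin n) 1) := ⟨1, by simp⟩
  obtain ⟨w, ⟨hw, -⟩, -⟩ := hP.2 _ primitive
  exact Finset.card_pos.2 ⟨w, hw⟩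

theorem KakeyaBound.le_card_of_isProjRepSet {C : ℝ} (h : KakeyaBound (Fin n) (ZMod N) C)
    (hC : 0 ≤ C) (hn : n ≠ 0) {P : Finset (Fin n → ZMod N)} (hP : IsProjRepSet N n P) {m : ℕ}
    {ε : ℝ} {S : Finset (Fin n → ZMod N)}
    (hS : ε * #P ≤ #{u ∈ P | ∃ a : Fin n → ZMod N, m ≤ #(lineF a u ∩ S)}) :
    C * ε * (m : ℝ) ^ n ≤ #S := by
  classical
  let rich (u : Fin n → ZMod N) : Prop := ∃ a : Fin n → ZMod N, m ≤ #(lineF a u ∩ S)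
  have card_units_pos : (0 : ℝ) < Fintype.card (ZMod N)ˣ := by exact_mod_cast Fintype.card_pos
  have card_P_pos : (0 : ℝ) < #P := by exact_mod_cast hP.card_pos hn
  have card_directions :
      (#(unimodularVecs (Fin n) (ZMod N)) : ℝ) = Fintype.card (ZMod N)ˣ * #P := by
    have := hP.nsmul_sum (f := fun _ ↦ (1 : ℝ)) fun _ _ ↦ rfl
    simpa using this.symm
  have sum_rich : ∑ u ∈ unimodularVecs (Fin n) (ZMod N), ((if rich u then m else 0 : ℕ) : ℝ) ^ n =
      Fintype.card (ZMod N)ˣ * (#{u ∈ P | rich u} * (m : ℝ) ^ n) := by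
    rw [← hP.nsmul_sum fun c u ↦ by simp only [rich, lineF_units_smul], nsmul_eq_mul,
      ← nsmul_eq_mul #_, ← sum_const, sum_filter]
    refine congrArg _ (sum_congr rfl fun u _ ↦ ?_)
    split_ifs <;> simp [hn]
  have bound := h S (fun u ↦ if rich u then m else 0) fun u _ ↦ by
    split_ifs with hu
    · exact hasRichLine_of_le_card_lineF_inter hu.choose_spec
    · exact hasRichLine_zero S u
  rw [Fintype.card_fin, sum_rich, card_directions] at bound
  refine le_of_mul_le_mul_right ?_ (mul_pos card_units_pos card_P_pos)
  calc C * ε * (m : ℝ) ^ n * (Fintype.card (ZMod N)ˣ * #P)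
      = C * (Fintype.card (ZMod N)ˣ * (ε * #P * (m : ℝ) ^ n)) := by ring
    _ ≤ C * (Fintype.card (ZMod N)ˣ * (#{u ∈ P | rich u} * (m : ℝ) ^ n)) := by gcongr
    _ ≤ #S * (Fintype.card (ZMod N)ˣ * #P) := bound

end ProjectiveSpace

theorem ceil_log_div_log_natCast (b n : ℕ) :
    ⌈Real.log n / Real.log b⌉ = (Nat.clog b n : ℤ) := by
  rw [Real.log_div_log, Real.ceil_logb_natCast (Nat.cast_nonneg n), Int.clog_natCast]

theorem stmt1_general {κ : Type*} [Fintype κ] [DecidableEq κ] (n : ℕ) (hn : 1 ≤ n) (p k : κ → ℕ)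
    (hp : ∀ i, (p i).Prime) (hinj : Function.Injective p) (hk : ∀ i, 1 ≤ k i) (z : κ) (N : ℕ)
    [NeZero N] (hN : N = ∏ i, p i ^ k i) (P : Finset (Fin n → ZMod N)) (hP : IsProjRepSet N n P)
    (m : ℕ) (ε : ℝ) (S : Finset (Fin n → ZMod N))
    (hS : ε * (P.card : ℝ) ≤
      ((P.filter fun u => ∃ a : Fin n → ZMod N, m ≤ ((lineF a u) ∩ S).card).card : ℝ)) :
    (S.card : ℝ) ≥
      ((∏ j ∈ univ.erase z, 1 / ((k j : ℝ) * Real.log (p j) + 1)) *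
        ∏ i, 1 / (2 * ((k i : ℝ) + ((⌈Real.log n / Real.log (p i)⌉ : ℤ) : ℝ)))) ^ n *
      ε * (m : ℝ) ^ n := by
  have : NeZero n := ⟨Nat.ne_of_gt hn⟩
  have hl (i : κ) : Fintype.card (Fin n) * p i ^ k i ≤ p i ^ (k i + Nat.clog (p i) n) := by
    rw [Fintype.card_fin, pow_add, mul_comm]
    exact Nat.mul_le_mul_left _ <| Nat.le_pow_clog (hp i).one_lt n
  have bound := kakeyaBound_zmod_prod_prime_pow (N := N) hp hinj (fun i ↦ Nat.ne_of_gt (hk i)) hl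
    (notMem_erase z univ) (by rwa [insert_erase (mem_univ z)])
  simp only [insert_erase (mem_univ z), Fintype.card_fin, Nat.cast_add] at bound
  simp only [ceil_log_div_log_natCast, Int.cast_natCast]
  exact bound.le_card_of_isProjRepSet (by positivity) (NeZero.ne n) hP hS

theorem stmt1 (n r : ℕ) (hn : 1 ≤ n) (hr : 1 ≤ r)
    (p k : Fin r → ℕ) (hp : ∀ i, (p i).Prime)
    (hord : ∀ i j : Fin r, i < j → p j < p i)
    (hk : ∀ i, 1 ≤ k i) (N : ℕ) [NeZero N] (hN : N = ∏ i, p i ^ k i)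
    (P : Finset (Fin n → ZMod N)) (hP : IsProjRepSet N n P)
    (m : ℕ) (ε : ℝ) (hε0 : 0 ≤ ε) (hε1 : ε ≤ 1)
    (S : Finset (Fin n → ZMod N))
    (hS : ε * (P.card : ℝ) ≤
      ((P.filter fun u => ∃ a : Fin n → ZMod N, m ≤ ((lineF a u) ∩ S).card).card : ℝ)) :
    (S.card : ℝ) ≥
      ((∏ j ∈ Finset.univ.filter (fun j : Fin r => (j : ℕ) < r - 1),
          1 / ((k j : ℝ) * Real.log (p j) + 1)) *
        ∏ i : Fin r, 1 / (2 * ((k i : ℝ) + ((⌈Real.log n / Real.log (p i)⌉ : ℤ) : ℝ)))) ^ n *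
      ε * (m : ℝ) ^ n := by
  have erase_last : (univ.filter fun j : Fin r ↦ (j : ℕ) < r - 1) = univ.erase ⟨r - 1, by lia⟩ := by
    grind
  rw [erase_last]
  exact stmt1_general n hn p k hp (StrictAnti.injective hord) hk _ N hN P hP m ε S hS
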